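/- Let d, N be positive integers, let α, σ be positive real numbers, and let y_1, …, y_N ∈ ℝ^d. For x ∈ ℝ^d define v_i(x) = exp(-‖x - α·y_i‖² / (2σ²)) and w_i(x) = v_i(x) / Σ_{j=1}^N v_j(x). Then the map m : ℝ^d → ℝ^d given by m(x) = Σ_{i=1}^N w_i(x)·y_i is differentiable, and for every x its Fréchet derivative, viewed as a d×d matrix (Jacobian), equals (α/σ²)·[ Σ_{i=1}^N w_i(x)·y_i y_iᵀ − m(x) m(x)ᵀ ]. -/

import Mathlib

open scoped BigOperators

/-- The outer product `u vᵀ` of two vectors in `ℝ^d`, with `(k,l)` entry `u k * v l`. -/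
def outer {d : ℕ} (u v : EuclideanSpace ℝ (Fin d)) : Matrix (Fin d) (Fin d) ℝ :=
  Matrix.of fun k l => u k * v l

/-!
Expanding `‖x - α • y i‖ ^ 2` shows that the Gaussian exponents differ from the affine functions
`β * α * ⟪y i, x⟫ - β * α ^ 2 / 2 * ‖y i‖ ^ 2`, where `β = 1 / σ ^ 2`, by the term
`β / 2 * ‖x‖ ^ 2`, which does not depend on `i` and cancels in the weights. So `m` is the mean of
the `y i` under the softmax weights of affine functions with gradients `β * α • y i`, and since the
derivative of a softmax weight is the weight times the centred derivative of its score, the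
derivative of `m` is `β * α` times the covariance operator of the `y i`.
-/

open InnerProductSpace

section Softmax

variable {ι : Type*} [Fintype ι]

/-- The softmax weights of a finite family of scores `a`, proportional to `exp (a i)`. They
sum to `1` when the index type is nonempty. -/
noncomputable def softmax (a : ι → ℝ) (i : ι) : ℝ :=
  Real.exp (a i) / ∑ j, Real.exp (a j)

lemma softmax_sub_const (a : ι → ℝ) (c : ℝ) : softmax (fun i => a i - c) = softmax a := by
  ext i
  simp only [softmax, Real.exp_sub, ← Finset.sum_div]
  exact div_div_div_cancel_right₀ (Real.exp_ne_zero c) _ _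

lemma sum_exp_pos [Nonempty ι] (a : ι → ℝ) : 0 < ∑ j, Real.exp (a j) :=
  Finset.sum_pos (fun j _ => Real.exp_pos (a j)) Finset.univ_nonempty

lemma softmax_eq_exp_sub_log [Nonempty ι] (a : ι → ℝ) (i : ι) :
    softmax a i = Real.exp (a i - Real.log (∑ j, Real.exp (a j))) := by
  rw [softmax, Real.exp_sub, Real.exp_log (sum_exp_pos a)]

variable {E F : Type*} [NormedAddCommGroup E] [NormedSpace ℝ E]
  [NormedAddCommGroup F] [NormedSpace ℝ F]
  {f : ι → E → ℝ} {f' : ι → E →L[ℝ] ℝ} {x : E}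

lemma hasFDerivAt_log_sum_exp [Nonempty ι] (hf : ∀ i, HasFDerivAt (f i) (f' i) x) :
    HasFDerivAt (fun z => Real.log (∑ j, Real.exp (f j z)))
      (∑ j, softmax (f · x) j • f' j) x := by
  have hsum : HasFDerivAt (fun z => ∑ j, Real.exp (f j z)) (∑ j, Real.exp (f j x) • f' j) x :=
    HasFDerivAt.fun_sum fun j _ => (hf j).exp
  refine (hsum.log (sum_exp_pos (f · x)).ne').congr_fderiv ?_
  simp only [softmax, Finset.smul_sum, smul_smul, div_eq_inv_mul]

lemma hasFDerivAt_softmax (hf : ∀ i, HasFDerivAt (f i) (f' i) x) (i : ι) :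
    HasFDerivAt (fun z => softmax (f · z) i)
      (softmax (f · x) i • (f' i - ∑ j, softmax (f · x) j • f' j)) x := by
  have : Nonempty ι := ⟨i⟩
  simp only [softmax_eq_exp_sub_log _ i]
  exact ((hf i).fun_sub (hasFDerivAt_log_sum_exp hf)).exp

lemma hasFDerivAt_sum_softmax_smul (hf : ∀ i, HasFDerivAt (f i) (f' i) x) (y : ι → F) :
    HasFDerivAt (fun z => ∑ i, softmax (f · z) i • y i)
      (∑ i, softmax (f · x) i • (f' i - ∑ j, softmax (f · x) j • f' j).smulRight (y i)) x := by
  refine (HasFDerivAt.fun_sum fun i _ => (hasFDerivAt_softmax hf i).smul_const (y i)).congr_fderiv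
    (Finset.sum_congr rfl fun i _ => ?_)
  ext h
  simp [mul_smul]

end Softmax

section InnerProductSpace

variable {ι E : Type*} [Fintype ι] [NormedAddCommGroup E] [InnerProductSpace ℝ E]

/-- The covariance operator `∑ wᵢ yᵢ ⊗ yᵢ - μ ⊗ μ`, with `μ = ∑ wᵢ yᵢ`, of vectors `y i` carrying
the weights `w i`. It agrees with the centred form `∑ wᵢ (yᵢ - μ) ⊗ (yᵢ - μ)` when the weights sum
to `1`. -/
noncomputable def weightedCovariance (w : ι → ℝ) (y : ι → E) : E →L[ℝ] E :=
  ∑ i, w i • rankOne ℝ (y i) (y i) - rankOne ℝ (∑ i, w i • y i) (∑ i, w i • y i)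

lemma weightedCovariance_eq_sum_rankOne_sub (w : ι → ℝ) (y : ι → E) :
    weightedCovariance w y = ∑ i, w i • rankOne ℝ (y i) (y i - ∑ j, w j • y j) := by
  have hmean (u : E) : ∑ i, w i • rankOne ℝ (y i) u = rankOne ℝ (∑ i, w i • y i) u := by
    simp only [map_sum, map_smul, sum_apply, smul_apply]
  simp only [weightedCovariance, map_sub, smul_sub, Finset.sum_sub_distrib, hmean]

lemma hasFDerivAt_sum_softmax_affine_smul (c : ℝ) (y : ι → E) (b : ι → ℝ) (x : E) :
    HasFDerivAt (fun z => ∑ i, softmax (fun j => c * inner ℝ (y j) z + b j) i • y i)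
      (c • weightedCovariance (softmax fun j => c * inner ℝ (y j) x + b j) y) x := by
  have hscore (i : ι) :
      HasFDerivAt (fun z => c * inner ℝ (y i) z + b i) (c • innerSL ℝ (y i)) x :=
    ((innerSL ℝ (y i)).hasFDerivAt.const_mul c).add_const (b i)
  refine (hasFDerivAt_sum_softmax_smul hscore y).congr_fderiv ?_
  generalize softmax (fun j => c * inner ℝ (y j) x + b j) = w
  have hcentred (i : ι) : c • innerSL ℝ (y i) - ∑ j, w j • c • innerSL ℝ (y j) =
      c • innerSL ℝ (y i - ∑ j, w j • y j) := by
    simp only [map_sub, map_sum, map_smul, smul_sub, Finset.smul_sum, smul_comm c]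
  simp only [weightedCovariance_eq_sum_rankOne_sub, Finset.smul_sum, hcentred]
  refine Finset.sum_congr rfl fun i _ => ?_
  ext h
  simp only [rankOne_def, smul_apply, ContinuousLinearMap.smulRight_apply, smul_assoc, smul_comm c]

lemma softmax_gaussian_eq_softmax_affine (α β : ℝ) (y : ι → E) (x : E) :
    softmax (fun i => -(β / 2) * ‖x - α • y i‖ ^ 2) =
      softmax (fun i => α * β * inner ℝ (y i) x + -(β / 2) * ‖α • y i‖ ^ 2) := by
  rw [← softmax_sub_const _ (-(β / 2) * ‖x‖ ^ 2)]
  congr! 2 with i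
  rw [norm_sub_sq_real, inner_smul_right, real_inner_comm]
  ring

lemma rankOne_apply_single_eq_outer {d : ℕ} (u v : EuclideanSpace ℝ (Fin d)) (k l : Fin d) :
    rankOne ℝ u v (EuclideanSpace.single l 1) k = outer u v k l := by
  simp [outer, EuclideanSpace.inner_single_right, mul_comm]

theorem jacobian_softmax_weighted_mean_general (α β : ℝ) (y : ι → E) (v w : ι → E → ℝ) (m : E → E)
    (hv : ∀ i x, v i x = Real.exp (-(β / 2) * ‖x - α • y i‖ ^ 2))
    (hw : ∀ i x, w i x = v i x / ∑ j, v j x)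
    (hm : ∀ x, m x = ∑ i, w i x • y i) (x : E) :
    HasFDerivAt m
      ((α * β) • (∑ i, w i x • rankOne ℝ (y i) (y i) - rankOne ℝ (m x) (m x))) x := by
  have hsoftmax (i : ι) (z : E) :
      w i z = softmax (fun j => α * β * inner ℝ (y j) z + -(β / 2) * ‖α • y j‖ ^ 2) i := by
    rw [← softmax_gaussian_eq_softmax_affine, hw]
    simp only [hv, softmax]
  obtain rfl : m = fun z => ∑ i, w i z • y i := funext hm
  simpa only [hsoftmax, weightedCovariance] using hasFDerivAt_sum_softmax_affine_smul (α * β) y _ x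

end InnerProductSpace

/-- the Jacobian of the softmax-weighted mean `m x = Σᵢ wᵢ(x) • yᵢ`
equals `(α/σ²) • [Σᵢ wᵢ(x) • yᵢyᵢᵀ − m(x)m(x)ᵀ]`. -/
theorem jacobian_softmax_weighted_mean
    (d N : ℕ) (hd : 0 < d) (hN : 0 < N) (α σ : ℝ) (hα : 0 < α) (hσ : 0 < σ)
    (y : Fin N → EuclideanSpace ℝ (Fin d))
    (v w : Fin N → EuclideanSpace ℝ (Fin d) → ℝ)
    (m : EuclideanSpace ℝ (Fin d) → EuclideanSpace ℝ (Fin d))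
    (hv : ∀ i x, v i x = Real.exp (-‖x - α • y i‖ ^ 2 / (2 * σ ^ 2)))
    (hw : ∀ i x, w i x = v i x / ∑ j, v j x)
    (hm : ∀ x, m x = ∑ i, w i x • y i) :
    Differentiable ℝ m ∧
      ∀ x, (Matrix.of fun k l => (fderiv ℝ m x (EuclideanSpace.single l 1)) k) =
        (α / σ ^ 2) •
          (∑ i, w i x • outer (y i) (y i) - outer (m x) (m x)) := by
  have hderiv := jacobian_softmax_weighted_mean_general α (σ ^ 2)⁻¹ y v w m
    (fun i x => by rw [hv]; congr 1; ring) hw hm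
  refine ⟨fun x => (hderiv x).differentiableAt, fun x => ?_⟩
  ext k l
  simp only [(hderiv x).fderiv, Matrix.of_apply, Matrix.smul_apply, Matrix.sub_apply,
    Matrix.sum_apply, smul_apply, sub_apply, sum_apply, PiLp.smul_apply, PiLp.sub_apply,
    WithLp.ofLp_sum, Finset.sum_apply, rankOne_apply_single_eq_outer, div_eq_mul_inv]
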